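/- For every q ∈ Δ, the Bayes risk of the Max-Margin loss satisfies H_M(q) = max_{Q ∈ U(q, q)} ⟨L, Q⟩_F, where the maximum is over the transportation polytope U(q, q) (which is nonempty and compact). -/

import Mathlib

open Finset Set

variable {Y : Type*} [Fintype Y] [DecidableEq Y] [Nonempty Y]

/-- Probability simplex over `Y`. -/
def simplexSet (Y : Type*) [Fintype Y] : Set (Y → ℝ) :=
  {q | (∀ y, 0 ≤ q y) ∧ ∑ y, q y = 1}

/-- Bayes risk of the discrete loss `L`. -/
noncomputable def HL (L : Y → Y → ℝ) (q : Y → ℝ) : ℝ :=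
  ⨅ y : Y, ∑ y', L y y' * q y'

/-- Optimal-label set. -/
noncomputable def ystar (L : Y → Y → ℝ) (q : Y → ℝ) : Set Y :=
  {y | ∑ y', L y y' * q y' = HL L q}

/-- Prediction set of label `y`. -/
noncomputable def predSet (L : Y → Y → ℝ) (y : Y) : Set (Y → ℝ) :=
  {q ∈ simplexSet Y | y ∈ ystar L q}

/-- Max-Margin loss. -/
noncomputable def SM (L : Y → Y → ℝ) (v : Y → ℝ) (y : Y) : ℝ :=
  ⨆ y' : Y, (L y y' + v y' - v y)

/-- Bayes risk of the Max-Margin loss. -/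
noncomputable def HM (L : Y → Y → ℝ) (q : Y → ℝ) : ℝ :=
  ⨅ v : Y → ℝ, ∑ y, q y * SM L v y

/-- Conditional-risk minimizers of the Max-Margin loss. -/
noncomputable def vstarM (L : Y → Y → ℝ) (q : Y → ℝ) : Set (Y → ℝ) :=
  {v | ∑ y, q y * SM L v y = HM L q}

/-- Restricted-Max-Margin loss. -/
noncomputable def SRM (L : Y → Y → ℝ) (v : Y → ℝ) (y : Y) : ℝ :=
  sSup ((fun q => ∑ y', L y y' * q y' + ∑ z, v z * q z) '' predSet L y) - v y

/-- Bayes risk of the Restricted-Max-Margin loss. -/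
noncomputable def HRM (L : Y → Y → ℝ) (q : Y → ℝ) : ℝ :=
  ⨅ v : Y → ℝ, ∑ y, q y * SRM L v y

/-- Conditional-risk minimizers of the Restricted-Max-Margin loss. -/
noncomputable def vstarRM (L : Y → Y → ℝ) (q : Y → ℝ) : Set (Y → ℝ) :=
  {v | ∑ y, q y * SRM L v y = HRM L q}

/-- Max-Min-Margin loss. -/
noncomputable def SMM (L : Y → Y → ℝ) (v : Y → ℝ) (y : Y) : ℝ :=
  sSup ((fun q => (⨅ z : Y, ∑ y', L z y' * q y') + ∑ z, v z * q z) '' simplexSet Y) - v y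

/-- Bayes risk of the Max-Min-Margin loss. -/
noncomputable def HMM (L : Y → Y → ℝ) (q : Y → ℝ) : ℝ :=
  ⨅ v : Y → ℝ, ∑ y, q y * SMM L v y

/-- Transportation polytope `U(q, q)`. -/
def Upoly (q : Y → ℝ) : Set (Y → Y → ℝ) :=
  {Q | (∀ y y', 0 ≤ Q y y') ∧ (∀ y, ∑ y', Q y y' = q y) ∧ (∀ y', ∑ y, Q y y' = q y')}

/-- The constraint set `C_L`. -/
def CL (L : Y → Y → ℝ) : Set (Y → Y → ℝ) :=
  {Q | ∀ y z : Y, ∑ y', L y y' * Q y y' ≤ ∑ y', L z y' * Q y y'}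

lemma le_SM (L : Y → Y → ℝ) (v : Y → ℝ) (y y' : Y) :
    L y y' + v y' - v y ≤ SM L v y :=
  le_ciSup (f := fun y' => L y y' + v y' - v y) (Set.finite_range _).bddAbove y'

lemma exists_eq_SM (L : Y → Y → ℝ) (v : Y → ℝ) (y : Y) :
    ∃ m, L y m + v m - v y = SM L v y :=
  exists_eq_ciSup_of_finite

/-- Weak duality: every transport plan bounds the Max-Margin risk of every score from below. -/
lemma sum_mul_le_sum_SM (L : Y → Y → ℝ) {q : Y → ℝ} {Q : Y → Y → ℝ} (hQ : Q ∈ Upoly q)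
    (v : Y → ℝ) : ∑ y, ∑ y', L y y' * Q y y' ≤ ∑ y, q y * SM L v y := by
  obtain ⟨hpos, hrow, hcol⟩ := hQ
  have hpot : ∑ y, ∑ y', (v y' - v y) * Q y y' = 0 := by
    simp only [sub_mul, Finset.sum_sub_distrib]
    rw [Finset.sum_comm]
    simp only [← Finset.mul_sum, hrow, hcol, sub_self]
  calc ∑ y, ∑ y', L y y' * Q y y'
      = ∑ y, ∑ y', (L y y' + v y' - v y) * Q y y' := by
        rw [← add_zero (∑ y, ∑ y', L y y' * Q y y'), ← hpot]
        simp only [← Finset.sum_add_distrib]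
        exact Finset.sum_congr rfl fun y _ => Finset.sum_congr rfl fun y' _ => by ring
    _ ≤ ∑ y, ∑ y', SM L v y * Q y y' :=
        Finset.sum_le_sum fun y _ => Finset.sum_le_sum fun y' _ =>
          mul_le_mul_of_nonneg_right (le_SM L v y y') (hpos y y')
    _ = ∑ y, q y * SM L v y :=
        Finset.sum_congr rfl fun y _ => by rw [← Finset.mul_sum, hrow, mul_comm]

/-- The diagonal transport plan. -/
lemma diagonal_mem_Upoly {q : Y → ℝ} (hq : ∀ y, 0 ≤ q y) :
    (fun y y' => q y * (Pi.single y 1 : Y → ℝ) y') ∈ Upoly q := by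
  refine ⟨fun y y' => mul_nonneg (hq y) ?_, fun y => ?_, fun y' => ?_⟩
  · rw [Pi.single_apply]
    split_ifs <;> norm_num
  · simp [Pi.single_apply]
  · simp [Pi.single_apply]

/-- Second marginal and transport cost of the plan with first marginal `q` and transition
matrix `P`. -/
noncomputable def marginalCost (L : Y → Y → ℝ) (q : Y → ℝ) :
    (Y → Y → ℝ) →ₗ[ℝ] (Y → ℝ) × ℝ where
  toFun P := (fun y' => ∑ y, q y * P y y', ∑ y, ∑ y', L y y' * (q y * P y y'))
  map_add' P P' := by
    ext <;> simp [mul_add, Finset.sum_add_distrib]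
  map_smul' c P := by
    ext
    · simp [Finset.mul_sum, mul_left_comm]
    · simp [Finset.mul_sum, mul_left_comm]

lemma continuousLinearMap_prod_apply (f : StrongDual ℝ ((Y → ℝ) × ℝ)) (x : Y → ℝ) (t : ℝ) :
    f (x, t) = ∑ y, x y * f (Pi.single y 1, 0) + t * f (0, 1) := by
  have hsum : ((x, t) : (Y → ℝ) × ℝ)
      = ∑ y, x y • ((Pi.single y 1, 0) : (Y → ℝ) × ℝ) + t • ((0, 1) : (Y → ℝ) × ℝ) := by
    refine Prod.ext ?_ ?_
    · ext z
      simp [Prod.fst_sum, Finset.sum_apply, Pi.single_apply]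
    · simp [Prod.snd_sum]
  rw [hsum]
  simp only [map_add, map_sum, map_smul, smul_eq_mul]

/-- Strong duality, by separating `(q, HM L q)` from the compact convex set of attainable
marginal-cost pairs. -/
lemma exists_marginalCost_eq (L : Y → Y → ℝ) (hdiag : ∀ y, L y y = 0) {q : Y → ℝ}
    (hHM : 0 ≤ HM L q) (hbdd : BddBelow (Set.range fun v : Y → ℝ => ∑ y, q y * SM L v y)) :
    ∃ P : Y → Y → ℝ, (∀ y, P y ∈ stdSimplex ℝ Y) ∧ marginalCost L q P = (q, HM L q) := by
  let K : Set (Y → Y → ℝ) := Set.univ.pi fun _ => stdSimplex ℝ Y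
  by_contra hne
  have hnot : (q, HM L q) ∉ marginalCost L q '' K := by
    rintro ⟨P, hP, hPe⟩
    exact hne ⟨P, fun y => hP y trivial, hPe⟩
  have hconv : Convex ℝ (marginalCost L q '' K) :=
    (convex_pi fun _ _ => convex_stdSimplex ℝ Y).linear_image _
  have hcomp : IsCompact (marginalCost L q '' K) :=
    (isCompact_univ_pi fun _ => isCompact_stdSimplex ℝ Y).image
      (LinearMap.continuous_of_finiteDimensional _)
  obtain ⟨f, u, hfu, huf⟩ := geometric_hahn_banach_closed_point hconv hcomp.isClosed hnot
  set a : Y → ℝ := fun y => f (Pi.single y 1, 0) with ha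
  set c : ℝ := f (0, 1) with hc
  have hvertex (m : Y → Y) :
      ∑ y, q y * a (m y) + (∑ y, q y * L y (m y)) * c < u := by
    have hmem : (fun y => Pi.single (m y) 1 : Y → Y → ℝ) ∈ K :=
      fun y _ => single_mem_stdSimplex ℝ (m y)
    have hlt := hfu _ (Set.mem_image_of_mem _ hmem)
    have heq : marginalCost L q (fun y => Pi.single (m y) 1)
        = (fun y' => ∑ y, q y * (Pi.single (m y) 1 : Y → ℝ) y', ∑ y, q y * L y (m y)) := by
      refine Prod.ext rfl ?_
      simp [marginalCost, Pi.single_apply, mul_comm]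
    rw [heq, continuousLinearMap_prod_apply] at hlt
    simp only [Finset.sum_mul] at hlt ⊢
    rw [Finset.sum_comm] at hlt
    simpa [Pi.single_apply, ha] using hlt
  rw [continuousLinearMap_prod_apply] at huf
  have hself := hvertex id
  simp only [id, hdiag, mul_zero, Finset.sum_const_zero, zero_mul, add_zero] at hself
  have hcpos : 0 < c := pos_of_mul_pos_right (by linarith : 0 < HM L q * c) hHM
  choose m hm using exists_eq_SM L fun y => a y / c
  have hle : HM L q ≤ ∑ y, q y * SM L (fun y => a y / c) y := ciInf_le hbdd _
  have hrisk : (∑ y, q y * SM L (fun y => a y / c) y) * c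
      = ∑ y, q y * a (m y) + (∑ y, q y * L y (m y)) * c - ∑ y, q y * a y := by
    rw [Finset.sum_mul, Finset.sum_mul, ← Finset.sum_add_distrib, ← Finset.sum_sub_distrib]
    refine Finset.sum_congr rfl fun y _ => ?_
    rw [← hm y]
    field_simp
    ring
  have := mul_le_mul_of_nonneg_right hle hcpos.le
  linarith [hvertex m]

theorem stmt9 (Y : Type*) [Fintype Y] [DecidableEq Y] [Nonempty Y] (L : Y → Y → ℝ)
    (hcard : 2 ≤ Fintype.card Y)
    (hnonneg : ∀ y y', 0 ≤ L y y')
    (hzero : ∀ y y', L y y' = 0 ↔ y = y') :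
    ∀ q ∈ simplexSet Y,
      IsGreatest ((fun Q => ∑ y, ∑ y', L y y' * Q y y') '' Upoly q) (HM L q) := by
  rintro q ⟨hq, -⟩
  have hweak {Q : Y → Y → ℝ} (hQ : Q ∈ Upoly q) : ∑ y, ∑ y', L y y' * Q y y' ≤ HM L q :=
    le_ciInf fun v => sum_mul_le_sum_SM L hQ v
  have hdiag := diagonal_mem_Upoly hq
  have hHM : 0 ≤ HM L q :=
    (Finset.sum_nonneg fun y _ => Finset.sum_nonneg fun y' _ =>
      mul_nonneg (hnonneg y y') (hdiag.1 y y')).trans (hweak hdiag)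
  have hbdd : BddBelow (Set.range fun v : Y → ℝ => ∑ y, q y * SM L v y) :=
    ⟨_, Set.forall_mem_range.2 fun v => sum_mul_le_sum_SM L hdiag v⟩
  refine ⟨?_, Set.forall_mem_image.2 fun Q hQ => hweak hQ⟩
  obtain ⟨P, hP, hPe⟩ := exists_marginalCost_eq L (fun y => (hzero y y).2 rfl) hHM hbdd
  refine ⟨fun y y' => q y * P y y', ⟨fun y y' => mul_nonneg (hq y) ((hP y).1 y'), fun y => ?_,
    fun y' => congrFun (congrArg Prod.fst hPe) y'⟩, congrArg Prod.snd hPe⟩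
  rw [← Finset.mul_sum, (hP y).2, mul_one]
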